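/- Every quaternion matrix A ∈ ℍ^{n×n} (n ≥ 1) has at least one left eigenvalue: there exist λ ∈ ℍ and x ∈ ℍⁿ with x ≠ 0 such that Ax = λx. -/

import Mathlib

open Quaternion Matrix

section core
variable {R : Type*} [NormedRing R] [NormedAlgebra ℝ R]

/-- The antisymmetrised cubic trace. -/
noncomputable def cubicW (τ : R →L[ℝ] ℝ) (a b c h : R) : ℝ :=
  τ (h * a * (h * b) * (h * c)) - τ (h * a * (h * c) * (h * b))

/-- The components of the vector field (dual of the closed 3-form). -/
noncomputable def fieldV (τ : R →L[ℝ] ℝ) (E : Fin 4 → R) (i : Fin 4) (h : R) : ℝ :=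
  ![cubicW τ (E 1) (E 2) (E 3) h, -cubicW τ (E 0) (E 2) (E 3) h,
    cubicW τ (E 0) (E 1) (E 3) h, -cubicW τ (E 0) (E 1) (E 2) h] i

theorem word_hasFDerivAt (τ : R →L[ℝ] ℝ) {F : Type*} [NormedAddCommGroup F] [NormedSpace ℝ F]
    {h : F → R} {h' : F →L[ℝ] R} {x : F} (hh : HasFDerivAt h h' x) (a b c : R) :
    ∃ f' : F →L[ℝ] ℝ, HasFDerivAt (fun y => τ (h y * a * (h y * b) * (h y * c))) f' x ∧
      ∀ v, f' v = τ (h' v * a * (h x * b) * (h x * c)) + τ (h x * a * (h' v * b) * (h x * c))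
        + τ (h x * a * (h x * b) * (h' v * c)) := by
  refine ⟨_, τ.hasFDerivAt.comp x
    (((hh.mul_const' a).mul' (hh.mul_const' b)).mul' (hh.mul_const' c)), ?_⟩
  intro v
  simp only [ContinuousLinearMap.comp_apply, ← map_add]
  congr 1
  simp [mul_assoc, add_mul]
  abel

theorem cubicW_hasFDerivAt (τ : R →L[ℝ] ℝ) {F : Type*} [NormedAddCommGroup F] [NormedSpace ℝ F]
    {h : F → R} {h' : F →L[ℝ] R} {x : F} (hh : HasFDerivAt h h' x) (a b c : R) :
    ∃ f' : F →L[ℝ] ℝ, HasFDerivAt (fun y => cubicW τ a b c (h y)) f' x ∧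
      ∀ v, f' v = (τ (h' v * a * (h x * b) * (h x * c)) + τ (h x * a * (h' v * b) * (h x * c))
        + τ (h x * a * (h x * b) * (h' v * c))) -
        (τ (h' v * a * (h x * c) * (h x * b)) + τ (h x * a * (h' v * c) * (h x * b))
        + τ (h x * a * (h x * c) * (h' v * b))) := by
  obtain ⟨f, hf, hf'⟩ := word_hasFDerivAt τ hh a b c
  obtain ⟨g, hg, hg'⟩ := word_hasFDerivAt τ hh a c b
  exact ⟨f - g, hf.sub hg, fun v => by simp [hf', hg']⟩

/-- The divergence of the field vanishes. -/
theorem fieldV_div (τ : R →L[ℝ] ℝ) (hτ : ∀ x y, τ (x * y) = τ (y * x)) (E : Fin 4 → R)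
    {h : (Fin 4 → ℝ) → R} {h' : (Fin 4 → ℝ) →L[ℝ] R} {x : Fin 4 → ℝ} (hh : HasFDerivAt h h' x)
    (hE : ∀ i, h' (Pi.single i 1) = h x * E i * h x) :
    ∃ f' : Fin 4 → (Fin 4 → ℝ) →L[ℝ] ℝ, (∀ i, HasFDerivAt (fun y => fieldV τ E i (h y)) (f' i) x) ∧
      ∑ i, f' i (Pi.single i 1) = 0 := by
  obtain ⟨f0, h0, d0⟩ := cubicW_hasFDerivAt τ hh (E 1) (E 2) (E 3)
  obtain ⟨f1, h1, d1⟩ := cubicW_hasFDerivAt τ hh (E 0) (E 2) (E 3)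
  obtain ⟨f2, h2, d2⟩ := cubicW_hasFDerivAt τ hh (E 0) (E 1) (E 3)
  obtain ⟨f3, h3, d3⟩ := cubicW_hasFDerivAt τ hh (E 0) (E 1) (E 2)
  refine ⟨![f0, -f1, f2, -f3], ?_, ?_⟩
  · intro i
    fin_cases i
    · exact h0
    · exact h1.neg
    · exact h2
    · exact h3.neg
  · have cyc : ∀ a b c d : R, τ (h x * (a * (h x * (b * (h x * (c * (h x * d))))))) =
        τ (h x * (b * (h x * (c * (h x * (d * (h x * a))))))) := by
      intro a b c d
      have := hτ (h x * a) (h x * (b * (h x * (c * (h x * d)))))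
      simpa only [mul_assoc] using this
    simp only [Fin.sum_univ_four, Matrix.cons_val, _root_.neg_apply, d0, d1, d2, d3,
      hE, mul_assoc]
    have c1 := cyc (E 0) (E 1) (E 2) (E 3)
    have c2 := cyc (E 1) (E 2) (E 3) (E 0)
    have c3 := cyc (E 2) (E 3) (E 0) (E 1)
    have c4 := cyc (E 0) (E 1) (E 3) (E 2)
    have c5 := cyc (E 1) (E 3) (E 2) (E 0)
    have c6 := cyc (E 3) (E 2) (E 0) (E 1)
    have c7 := cyc (E 0) (E 2) (E 1) (E 3)
    have c8 := cyc (E 2) (E 1) (E 3) (E 0)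
    have c9 := cyc (E 1) (E 3) (E 0) (E 2)
    have c10 := cyc (E 0) (E 2) (E 3) (E 1)
    have c11 := cyc (E 2) (E 3) (E 1) (E 0)
    have c12 := cyc (E 3) (E 1) (E 0) (E 2)
    have c13 := cyc (E 0) (E 3) (E 1) (E 2)
    have c14 := cyc (E 3) (E 1) (E 2) (E 0)
    have c15 := cyc (E 1) (E 2) (E 0) (E 3)
    have c16 := cyc (E 0) (E 3) (E 2) (E 1)
    have c17 := cyc (E 3) (E 2) (E 1) (E 0)
    have c18 := cyc (E 2) (E 1) (E 0) (E 3)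
    linarith

/-- The standard basis of the quaternions. -/
def quatBasis (i : Fin 4) : ℍ[ℝ] := ![⟨1, 0, 0, 0⟩, ⟨0, 1, 0, 0⟩, ⟨0, 0, 1, 0⟩, ⟨0, 0, 0, 1⟩] i

/-- The quaternion with given coordinates. -/
def quatOf (x : Fin 4 → ℝ) : ℍ[ℝ] := ⟨x 0, x 1, x 2, x 3⟩

theorem quatOf_comp (x : Fin 4 → ℝ) : (quatOf x).re = x 0 ∧ (quatOf x).imI = x 1 ∧
    (quatOf x).imJ = x 2 ∧ (quatOf x).imK = x 3 := ⟨rfl, rfl, rfl, rfl⟩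

theorem quatBasis_re : (quatBasis 0).re = 1 ∧ (quatBasis 1).re = 0 ∧ (quatBasis 2).re = 0 ∧
    (quatBasis 3).re = 0 := ⟨rfl, rfl, rfl, rfl⟩

theorem quatBasis_imI : (quatBasis 0).imI = 0 ∧ (quatBasis 1).imI = 1 ∧ (quatBasis 2).imI = 0 ∧
    (quatBasis 3).imI = 0 := ⟨rfl, rfl, rfl, rfl⟩

theorem quatBasis_imJ : (quatBasis 0).imJ = 0 ∧ (quatBasis 1).imJ = 0 ∧ (quatBasis 2).imJ = 1 ∧
    (quatBasis 3).imJ = 0 := ⟨rfl, rfl, rfl, rfl⟩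

theorem quatBasis_imK : (quatBasis 0).imK = 0 ∧ (quatBasis 1).imK = 0 ∧ (quatBasis 2).imK = 0 ∧
    (quatBasis 3).imK = 1 := ⟨rfl, rfl, rfl, rfl⟩

theorem quatOf_eq (x : Fin 4 → ℝ) : quatOf x = ∑ i, x i • quatBasis i := by
  ext <;> simp [quatOf_comp, quatBasis_re, quatBasis_imI, quatBasis_imJ, quatBasis_imK,
    Fin.sum_univ_four]

theorem fieldV_quat (τ : R →L[ℝ] ℝ) (φ : ℍ[ℝ] →ₐ[ℝ] R) (c : ℝ) (hφ : ∀ q, τ (φ q) = c * q.re)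
    (x : Fin 4 → ℝ) (hx : quatOf x ≠ 0) (i : Fin 4) :
    fieldV τ (fun i => φ (quatBasis i)) i (φ (-(quatOf x)⁻¹)) =
      c * (2 * x i * (normSq (quatOf x))⁻¹ ^ 2) := by
  have hN : normSq (quatOf x) ≠ 0 := by simpa using hx
  have hN' : normSq (quatOf x) = x 0 ^ 2 + x 1 ^ 2 + x 2 ^ 2 + x 3 ^ 2 := by
    simp [normSq_def', quatOf_comp]
  have key : (normSq (quatOf x))⁻¹ = (normSq (quatOf x))⁻¹ ^ 2 *
      (x 0 ^ 2 + x 1 ^ 2 + x 2 ^ 2 + x 3 ^ 2) := by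
    rw [← hN']; field_simp
  rw [Quaternion.inv_def]
  generalize (normSq (quatOf x))⁻¹ = N at key ⊢
  have : ∀ a b d p : ℍ[ℝ], cubicW τ (φ a) (φ b) (φ d) (φ p) =
      c * (p * a * (p * b) * (p * d)).re - c * (p * a * (p * d) * (p * b)).re := by
    intro a b d p
    unfold cubicW
    simp only [← map_mul]
    rw [hφ, hφ]
  fin_cases i <;> simp [fieldV, this, -map_neg, -map_smul, quatOf_comp, quatBasis_re, quatBasis_imI, quatBasis_imJ, quatBasis_imK]
  · linear_combination (-2 * c * x 0 * N) * key
  · linear_combination (-2 * c * x 1 * N) * key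
  · linear_combination (-2 * c * x 2 * N) * key
  · linear_combination (-2 * c * x 3 * N) * key

theorem continuous_fieldV (τ : R →L[ℝ] ℝ) (E : Fin 4 → R) (i : Fin 4) :
    Continuous (fieldV τ E i) := by
  unfold fieldV cubicW
  fin_cases i <;> simp <;> fun_prop

open MeasureTheory Set in
/-- A divergence-free field on the cube can't point outward on each face. -/
theorem no_outward (f : Fin 4 → (Fin 4 → ℝ) → ℝ) (f' : Fin 4 → (Fin 4 → ℝ) → (Fin 4 → ℝ) →L[ℝ] ℝ)
    (hf : ∀ i x, HasFDerivAt (f i) (f' i x) x) (hdiv : ∀ x, ∑ i, f' i x (Pi.single i 1) = 0)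
    (hpos : ∀ i, ∀ x ∈ Icc (-1 : Fin 4 → ℝ) 1, x i = 1 → 0 < f i x)
    (hneg : ∀ i, ∀ x ∈ Icc (-1 : Fin 4 → ℝ) 1, x i = -1 → f i x < 0) : False := by
  have hc : ∀ i, Continuous (f i) := fun i =>
    continuous_iff_continuousAt.2 fun x => (hf i x).continuousAt
  have D := integral_divergence_of_hasFDerivAt_off_countable' (-1 : Fin 4 → ℝ) 1
    (fun i => by simp) f f' ∅ countable_empty (fun i => (hc i).continuousOn)
    (fun x _ i => hf i x) (by simp only [hdiv]; exact integrableOn_zero)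
  simp only [hdiv, integral_zero] at D
  have ins : ∀ (i : Fin 4) (s : ℝ), s ∈ Icc (-1 : ℝ) 1 → ∀ y ∈ Icc ((-1 : Fin 4 → ℝ) ∘ i.succAbove)
      ((1 : Fin 4 → ℝ) ∘ i.succAbove), i.insertNth s y ∈ Icc (-1 : Fin 4 → ℝ) 1 := by
    intro i s hs y hy
    rw [Fin.insertNth_mem_Icc]
    exact ⟨hs, hy⟩
  have cont : ∀ (i : Fin 4) (s : ℝ), Continuous fun y : Fin 3 → ℝ => f i (i.insertNth (α := fun _ => ℝ) s y) :=
    fun i s => (hc i).comp (continuous_const.finInsertNth i continuous_id)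
  have pos : ∀ (i : Fin 4) (g : (Fin 3 → ℝ) → ℝ), Continuous g →
      (∀ y ∈ Icc ((-1 : Fin 4 → ℝ) ∘ i.succAbove) ((1 : Fin 4 → ℝ) ∘ i.succAbove), 0 < g y) →
      0 < ∫ y in Icc ((-1 : Fin 4 → ℝ) ∘ i.succAbove) ((1 : Fin 4 → ℝ) ∘ i.succAbove), g y := by
    intro i g hg hy
    rw [setIntegral_pos_iff_support_of_nonneg_ae]
    · have : Function.support g ∩ Icc ((-1 : Fin 4 → ℝ) ∘ i.succAbove)
          ((1 : Fin 4 → ℝ) ∘ i.succAbove) = Icc ((-1 : Fin 4 → ℝ) ∘ i.succAbove)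
          ((1 : Fin 4 → ℝ) ∘ i.succAbove) :=
        inter_eq_right.2 fun y h => (hy y h).ne'
      rw [this, Real.volume_Icc_pi]
      simp
      norm_num
    · exact (ae_restrict_iff' measurableSet_Icc).2 (Filter.Eventually.of_forall fun y h => (hy y h).le)
    · exact hg.continuousOn.integrableOn_compact isCompact_Icc
  refine absurd D (ne_of_lt (Finset.sum_pos (fun i _ => ?_) ⟨0, Finset.mem_univ _⟩))
  have p1 := pos i _ (cont i 1) fun y hy => hpos i _ (ins i 1 (by simp) y hy) (by simp)
  have p2 := pos i _ (cont i (-1)).neg fun y hy => neg_pos.2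
    (hneg i _ (ins i (-1) (by simp) y hy) (by simp))
  simp only [Pi.neg_apply, integral_neg] at p2
  simp only [Pi.one_apply, Pi.neg_apply]
  linarith

open Set Filter Topology in
theorem core [CompleteSpace R] (τ : R →L[ℝ] ℝ) (hτ : ∀ x y, τ (x * y) = τ (y * x))
    (φ : ℍ[ℝ] →ₐ[ℝ] R) (c : ℝ) (hc : 0 < c) (hφ : ∀ q, τ (φ q) = c * q.re) (A : R) :
    ∃ t : ℝ, t ≠ 0 ∧ ∃ q : ℍ[ℝ], ¬ IsUnit (t • A - φ q) := by
  by_contra! H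
  set E : Fin 4 → R := fun i => φ (quatBasis i) with hE
  let S : (Fin 4 → ℝ) →L[ℝ] R := ∑ i, (ContinuousLinearMap.proj i : (Fin 4 → ℝ) →L[ℝ] ℝ).smulRight (E i)
  have hS : ∀ x, S x = φ (quatOf x) := by
    intro x
    simp [S, quatOf_eq, hE]
  have hS1 : ∀ i, S (Pi.single i 1) = E i := by
    intro i
    simp [S, Pi.single_apply]
  let G : ℝ × (Fin 4 → ℝ) → R := fun p => p.1 • A - S p.2
  have hG : Continuous G := by fun_prop
  have hne : ∀ (x : Fin 4 → ℝ) i, x i ≠ 0 → quatOf x ≠ 0 := by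
    intro x i hi h0
    apply hi
    fin_cases i
    · exact congrArg QuaternionAlgebra.re h0
    · exact congrArg QuaternionAlgebra.imI h0
    · exact congrArg QuaternionAlgebra.imJ h0
    · exact congrArg QuaternionAlgebra.imK h0
  have inv0 : ∀ x, quatOf x ≠ 0 → IsUnit (G (0, x)) ∧ Ring.inverse (G (0, x)) = φ (-(quatOf x)⁻¹) := by
    intro x hx
    let u : Rˣ := ⟨G (0, x), φ (-(quatOf x)⁻¹), by simp [G, hS, ← map_mul, hx],
      by simp [G, hS, ← map_mul, hx]⟩
    exact ⟨⟨u, rfl⟩, Ring.inverse_unit u⟩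
  have V0 : ∀ i x, quatOf x ≠ 0 → 0 < x i * fieldV τ E i (Ring.inverse (G (0, x))) ∨ x i = 0 := by
    intro i x hx
    by_cases h0 : x i = 0
    · exact Or.inr h0
    left
    rw [(inv0 x hx).2, fieldV_quat τ φ c hφ x hx i]
    have hN : normSq (quatOf x) ≠ 0 := by simpa using hx
    have : 0 < x i ^ 2 := by positivity
    have : 0 < c * (2 * x i ^ 2 * (normSq (quatOf x))⁻¹ ^ 2) := by positivity
    linarith
  have ev : ∀ i (s : ℝ), s ≠ 0 → ∀ᶠ t in 𝓝 (0 : ℝ), ∀ x ∈ Icc (-1 : Fin 4 → ℝ) 1 ∩ {x | x i = s},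
      0 < x i * fieldV τ E i (Ring.inverse (G (t, x))) := by
    intro i s hs
    have hK : IsCompact (Icc (-1 : Fin 4 → ℝ) 1 ∩ {x | x i = s}) :=
      isCompact_Icc.inter_right (isClosed_eq (continuous_apply i) continuous_const)
    refine hK.eventually_forall_of_forall_eventually ?_
    rintro x ⟨-, hx⟩
    have hxs : x i ≠ 0 := by rw [hx]; exact hs
    have hx0 := hne x i hxs
    obtain ⟨u, hu⟩ := (inv0 x hx0).1
    have c1 : ContinuousAt (fun p => Ring.inverse (G p)) (0, x) := by
      refine ContinuousAt.comp (g := Ring.inverse) ?_ hG.continuousAt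
      rw [← hu]
      exact NormedRing.inverse_continuousAt u
    have c2 : ContinuousAt (fun p : ℝ × (Fin 4 → ℝ) => p.2 i * fieldV τ E i (Ring.inverse (G p))) (0, x) :=
      ContinuousAt.mul (by fun_prop) ((continuous_fieldV τ E i).continuousAt.comp c1)
    exact c2.eventually (lt_mem_nhds ((V0 i x hx0).resolve_right hxs))
  have ev1 := eventually_all.2 fun i => ev i 1 one_ne_zero
  have ev2 := eventually_all.2 fun i => ev i (-1) (by norm_num)
  obtain ⟨t, ⟨ht1, ht2⟩, ht⟩ :=
    (((ev1.and ev2).filter_mono nhdsWithin_le_nhds).and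
      (self_mem_nhdsWithin : {(0 : ℝ)}ᶜ ∈ 𝓝[≠] (0 : ℝ))).exists
  have hd : ∀ x, ∃ h' : (Fin 4 → ℝ) →L[ℝ] R, HasFDerivAt (fun x => Ring.inverse (G (t, x))) h' x ∧
      ∀ i, h' (Pi.single i 1) = Ring.inverse (G (t, x)) * E i * Ring.inverse (G (t, x)) := by
    intro x
    obtain ⟨u, hu⟩ := H t ht (quatOf x)
    have hu' : G (t, x) = u := by rw [hu, ← hS]
    have hGd : HasFDerivAt (fun x => G (t, x)) (-S) x := by
      simpa [G] using S.hasFDerivAt.const_sub (t • A)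
    have hi := hasFDerivAt_ringInverse (𝕜 := ℝ) u
    rw [← hu'] at hi
    have hcomp := HasFDerivAt.comp (g := Ring.inverse) x hi hGd
    refine ⟨_, hcomp, ?_⟩
    intro i
    simp [hu', hS1]
  choose h' hh' hE' using hd
  choose f' hf' hdiv using fun x => fieldV_div τ hτ E (hh' x) (hE' x)
  refine no_outward (fun i x => fieldV τ E i (Ring.inverse (G (t, x)))) (fun i x => f' x i)
    (fun i x => hf' x i) hdiv ?_ ?_
  · intro i x hx hxi
    have := ht1 i x ⟨hx, hxi⟩
    rw [hxi] at this
    linarith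
  · intro i x hx hxi
    have := ht2 i x ⟨hx, hxi⟩
    rw [hxi] at this
    linarith

end core

theorem isUnit_of_mulVec_inj {n : ℕ} (M : Matrix (Fin n) (Fin n) ℍ[ℝ])
    (hM : ∀ x : Fin n → ℍ[ℝ], M.mulVec x = 0 → x = 0) : IsUnit M := by
  have inj : ∀ X : Matrix (Fin n) (Fin n) ℍ[ℝ], M * X = 0 → X = 0 := by
    intro X hX
    ext1 i j
    have := hM (fun k => X k j) (by
      ext1 i
      exact congrFun (congrFun hX i) j)
    exact congrFun this i
  have hinj : Function.Injective (LinearMap.mulLeft ℝ M) := by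
    rw [injective_iff_map_eq_zero]
    intro X hX
    exact inj X hX
  have hsurj := LinearMap.injective_iff_surjective.1 hinj
  obtain ⟨X, hX⟩ := hsurj 1
  have hX : M * X = 1 := hX
  have hX' : X * M = 1 := by
    refine sub_eq_zero.1 (inj _ ?_)
    rw [mul_sub, ← mul_assoc, hX]
    simp
  exact ⟨⟨M, X, hX, hX'⟩, rfl⟩

attribute [local instance] Matrix.linftyOpNormedRing Matrix.linftyOpNormedAlgebra

/-- Wood's theorem: every quaternion matrix `A ∈ ℍ^{n×n}` (with `n ≥ 1`) has at least one
left eigenvalue: there are `λ ∈ ℍ` and `x ∈ ℍⁿ`, `x ≠ 0`, with `A x = λ x`. -/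
theorem exists_left_eigenvalue (n : ℕ) (hn : 0 < n) (A : Matrix (Fin n) (Fin n) ℍ[ℝ]) :
    ∃ (l : ℍ[ℝ]) (x : Fin n → ℍ[ℝ]), x ≠ 0 ∧ A.mulVec x = fun k => l * x k := by
  have hcs : CompleteSpace (Matrix (Fin n) (Fin n) ℍ[ℝ]) := FiniteDimensional.complete ℝ _
  let τ0 : Matrix (Fin n) (Fin n) ℍ[ℝ] →ₗ[ℝ] ℝ :=
    { toFun := fun M => ∑ i, (M i i).re
      map_add' := fun M N => by simp [Finset.sum_add_distrib]
      map_smul' := fun r M => by simp [Finset.mul_sum] }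
  let τ : Matrix (Fin n) (Fin n) ℍ[ℝ] →L[ℝ] ℝ := LinearMap.toContinuousLinearMap τ0
  have hτv : ∀ M, τ M = ∑ i, (M i i).re := fun M => rfl
  have hre : ∀ a b : ℍ[ℝ], (a * b).re = (b * a).re := by
    intro a b
    simp only [Quaternion.re_mul]
    ring
  have hres : ∀ f : Fin n → ℍ[ℝ], (∑ i, f i).re = ∑ i, (f i).re := by
    intro f
    exact map_sum (⟨⟨fun q : ℍ[ℝ] => q.re, rfl⟩, fun _ _ => rfl⟩ : ℍ[ℝ] →+ ℝ) f _
  have hτ : ∀ x y, τ (x * y) = τ (y * x) := by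
    intro x y
    simp only [hτv, Matrix.mul_apply, hres]
    rw [Finset.sum_comm]
    simp only [hre]
  let φ : ℍ[ℝ] →ₐ[ℝ] Matrix (Fin n) (Fin n) ℍ[ℝ] :=
    { Matrix.scalar (Fin n) with
      commutes' := fun r => by
        ext1 i j
        simp [Matrix.algebraMap_matrix_apply, Matrix.diagonal_apply] }
  have hφv : ∀ q, φ q = Matrix.diagonal fun _ => q := fun q => rfl
  obtain ⟨t, ht, q, hq⟩ := core τ hτ φ n (by exact_mod_cast hn) (by
    intro q
    rw [hφv]
    refine (hτv _).trans ?_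
    simp) A
  have : ∃ x : Fin n → ℍ[ℝ], (t • A - φ q).mulVec x = 0 ∧ x ≠ 0 := by
    by_contra! hcon
    exact hq (isUnit_of_mulVec_inj _ hcon)
  obtain ⟨x, hx, hx0⟩ := this
  refine ⟨t⁻¹ • q, x, hx0, ?_⟩
  rw [Matrix.sub_mulVec, sub_eq_zero, Matrix.smul_mulVec, hφv] at hx
  ext1 k
  have hk := congrFun hx k
  rw [Matrix.mulVec_diagonal, Pi.smul_apply] at hk
  rw [smul_mul_assoc, ← hk, smul_smul, inv_mul_cancel₀ ht, one_smul]
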